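/- Let G and Ω be domains in ℂ, let K ⊆ K' be compact subsets of G, and let φ be a holomorphic map from G to Ω that is injective on a neighbourhood of K'. If K is G-convex and φ(K') is Ω-convex, then φ(K) is Ω-convex. -/

import Mathlib

/-! For closed `K`, being `Ω`-convex is a maximum-principle-like property: every bounded set
`s ⊆ Ω` with `frontier s ⊆ K` already lies in `K`. Now let `s ⊆ Ω` be bounded with
`frontier s ⊆ φ(K)`. Since `φ(K) ⊆ φ(K')` and `φ(K')` is `Ω`-convex, `s ⊆ φ(K')`. As `φ` is
continuous and injective near `K'`, the set `V` of points near `K'` which `φ` maps into `s`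
satisfies `V ⊆ K' ⊆ G` and `frontier V ⊆ K`. So `V ⊆ K` by the `G`-convexity of `K`, and hence
`s = φ(V) ⊆ φ(K)`. -/

open Set Metric Bornology Filter

/-- A *hole* of `E` is a nonempty bounded connected component of `ℂ \ E`. -/
def IsHole (E C : Set ℂ) : Prop :=
  (∃ z ∈ Eᶜ, C = connectedComponentIn Eᶜ z) ∧ Bornology.IsBounded C

/-- A compact set `K` contained in an open set `Ω` is `Ω`-*convex* if every hole of `K`
contains a point of `ℂ \ Ω`. -/
def OmegaConvex (Ω K : Set ℂ) : Prop :=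
  ∀ C : Set ℂ, IsHole K C → (C ∩ Ωᶜ).Nonempty

/-- The *polynomial hull* of `K`: the union of `K` and all of its holes. -/
def polyHull (K : Set ℂ) : Set ℂ :=
  K ∪ {z | z ∈ Kᶜ ∧ Bornology.IsBounded (connectedComponentIn Kᶜ z)}

/-- A sequence of maps is *eventually injective* on `G`: for every compact `K ⊆ G`, the maps
are eventually injective on a neighbourhood of `K` in `G`. -/
def EventuallyInjective (G : Set ℂ) (φ : ℕ → ℂ → ℂ) : Prop :=
  ∀ K : Set ℂ, K ⊆ G → IsCompact K →
    ∃ N : ℕ, ∀ n ≥ N, ∃ U : Set ℂ, IsOpen U ∧ K ⊆ U ∧ U ⊆ G ∧ Set.InjOn (φ n) U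

/-- `f` is `(Φ, G, Ω)`-*universal*: the family `{f ∘ φ n : n ∈ ℕ}` is dense in `H(G)` for the
topology of locally uniform convergence, i.e. every `g` holomorphic on `G` can be approximated
uniformly on every compact subset of `G` by functions `f ∘ φ n`. -/
def UniversalFor (G : Set ℂ) (φ : ℕ → ℂ → ℂ) (f : ℂ → ℂ) : Prop :=
  ∀ g : ℂ → ℂ, DifferentiableOn ℂ g G →
    ∀ K : Set ℂ, K ⊆ G → IsCompact K → ∀ ε : ℝ, 0 < ε →
      ∃ n : ℕ, ∀ z ∈ K, ‖f (φ n z) - g z‖ < ε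

/-- `E` has no hole (for a domain: simple connectivity). -/
def HasNoHole (E : Set ℂ) : Prop := ¬ ∃ C : Set ℂ, IsHole E C

/-- A *Jordan curve*: the image of the unit circle under an injective continuous map. -/
def IsJordanCurve (C : Set ℂ) : Prop :=
  ∃ γ : ℂ → ℂ, ContinuousOn γ (Metric.sphere 0 1) ∧ Set.InjOn γ (Metric.sphere 0 1) ∧
    C = γ '' Metric.sphere 0 1

/-- A *Jordan arc*: the image of `[0,1]` under an injective continuous map. -/
def IsJordanArc (C : Set ℂ) : Prop :=
  ∃ γ : ℝ → ℂ, ContinuousOn γ (Set.Icc 0 1) ∧ Set.InjOn γ (Set.Icc 0 1) ∧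
    C = γ '' Set.Icc 0 1

/-- A compact set is *regular* if its boundary is a union of Jordan curves. -/
def RegularCompact (K : Set ℂ) : Prop :=
  ∃ 𝒞 : Set (Set ℂ), (∀ C ∈ 𝒞, IsJordanCurve C) ∧ frontier K = ⋃₀ 𝒞

/-- `K` is `Ω`-*connected*: it has no hole if `Ω` is simply connected, and has at least one hole
if `Ω` is not simply connected. -/
def OmegaConnectedSet (Ω K : Set ℂ) : Prop :=
  (HasNoHole Ω → HasNoHole K) ∧ (¬ HasNoHole Ω → ∃ C : Set ℂ, IsHole K C)

/-- Membership in the family `M(Ω)` of nonempty compact subsets of `Ω` that are regular,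
connected, `Ω`-connected and `Ω`-convex. -/
def MemM (Ω K : Set ℂ) : Prop :=
  K.Nonempty ∧ IsCompact K ∧ K ⊆ Ω ∧ RegularCompact K ∧ IsConnected K ∧
    OmegaConnectedSet Ω K ∧ OmegaConvex Ω K

/-- `f` is `(Φ, M)`-*universal*: for every `K ∈ M`, the restrictions of the `f ∘ φ n` to `K`
are dense in `C(K)`. -/
def MUniversal (M : Set (Set ℂ)) (φ : ℕ → ℂ → ℂ) (f : ℂ → ℂ) : Prop :=
  ∀ K ∈ M, ∀ h : ℂ → ℂ, ContinuousOn h K → ∀ ε : ℝ, 0 < ε →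
    ∃ n : ℕ, ∀ z ∈ K, ‖f (φ n z) - h z‖ < ε

section Frontier

variable {X Y : Type*} [TopologicalSpace X] [TopologicalSpace Y]

theorem closure_connectedComponentIn_inter_subset (F : Set X) (x : X) :
    closure (connectedComponentIn F x) ∩ F ⊆ connectedComponentIn F x := by
  by_cases hx : x ∈ F
  · exact (isPreconnected_connectedComponentIn.subset_closure
      (subset_inter subset_closure (connectedComponentIn_subset F x))
      inter_subset_left).subset_connectedComponentIn
      ⟨subset_closure (mem_connectedComponentIn hx), hx⟩ inter_subset_right
  · simp [connectedComponentIn_eq_empty hx]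

theorem frontier_connectedComponentIn_subset_compl [LocallyConnectedSpace X] {F : Set X}
    (hF : IsOpen F) (x : X) : frontier (connectedComponentIn F x) ⊆ Fᶜ := by
  rw [hF.connectedComponentIn.frontier_eq]
  exact fun _ ⟨hcl, hy⟩ hyF ↦ hy (closure_connectedComponentIn_inter_subset F x ⟨hcl, hyF⟩)

theorem subset_of_isPreconnected_of_disjoint_frontier {s t : Set X} (ht : IsPreconnected t)
    (hne : (t ∩ s).Nonempty) (hd : Disjoint t (frontier s)) : t ⊆ s := by
  have h_interior : t ∩ closure s ⊆ interior s := fun _ ⟨hxt, hxs⟩ ↦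
    by_contra fun hxi ↦ disjoint_left.1 hd hxt ⟨hxs, hxi⟩
  refine (ht.subset_of_closure_inter_subset isOpen_interior ?_ ?_).trans interior_subset
  · exact hne.mono fun _ hx ↦ ⟨hx.1, h_interior ⟨hx.1, subset_closure hx.2⟩⟩
  · exact fun _ hx ↦ h_interior ⟨hx.2, closure_mono interior_subset hx.1⟩

theorem map_mem_frontier_of_mem_frontier_preimage {f : X → Y} {s : Set Y} {x : X}
    (hf : ContinuousAt f x) (hx : x ∈ frontier (f ⁻¹' s)) : f x ∈ frontier s := by
  rw [frontier_eq_closure_inter_closure] at hx ⊢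
  exact ⟨hf.continuousWithinAt.mem_closure hx.1 fun _ ↦ id,
    hf.continuousWithinAt.mem_closure hx.2 fun _ ↦ id⟩

theorem frontier_preimage_inter_subset_of_injOn {f : X → Y} {U K : Set X} {s : Set Y}
    (hU : IsOpen U) (hf : ContinuousOn f U) (hinj : InjOn f U) (hKU : K ⊆ U)
    (hcl : closure (f ⁻¹' s ∩ U) ⊆ U) (hfr : frontier s ⊆ f '' K) :
    frontier (f ⁻¹' s ∩ U) ⊆ K := by
  intro x hx
  have hxU : x ∈ U := hcl (frontier_subset_closure hx)
  have hx_preimage : x ∈ frontier (f ⁻¹' s) :=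
    ((frontier_inter_open_inter hU).subset ⟨hx, hxU⟩).1
  have hfx : f x ∈ frontier s :=
    map_mem_frontier_of_mem_frontier_preimage (hf.continuousAt (hU.mem_nhds hxU)) hx_preimage
  exact (hinj.mem_image_iff hKU hxU).1 (hfr hfx)

end Frontier

theorem exists_isHole_subset {K s : Set ℂ} (hsb : IsBounded s) (hfr : frontier s ⊆ K)
    (hsK : ¬s ⊆ K) : ∃ C ⊆ s, IsHole K C := by
  obtain ⟨x, hxs, hxK⟩ := not_subset.1 hsK
  have hCs : connectedComponentIn Kᶜ x ⊆ s :=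
    subset_of_isPreconnected_of_disjoint_frontier isPreconnected_connectedComponentIn
      ⟨x, mem_connectedComponentIn hxK, hxs⟩
      (disjoint_compl_left.mono (connectedComponentIn_subset Kᶜ x) hfr)
  exact ⟨_, hCs, ⟨x, hxK, rfl⟩, hsb.subset hCs⟩

theorem OmegaConvex.subset_of_frontier_subset {Ω K s : Set ℂ} (h : OmegaConvex Ω K)
    (hsb : IsBounded s) (hsΩ : s ⊆ Ω) (hfr : frontier s ⊆ K) : s ⊆ K := by
  by_contra hsK
  obtain ⟨C, hCs, hC⟩ := exists_isHole_subset hsb hfr hsK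
  exact inter_compl_nonempty_iff.1 (h C hC) (hCs.trans hsΩ)

theorem omegaConvex_iff_subset_of_frontier_subset {Ω K : Set ℂ} (hK : IsClosed K) :
    OmegaConvex Ω K ↔ ∀ s, IsBounded s → s ⊆ Ω → frontier s ⊆ K → s ⊆ K := by
  refine ⟨fun h s ↦ h.subset_of_frontier_subset, ?_⟩
  rintro h _ ⟨⟨z, hz, rfl⟩, hb⟩
  refine inter_compl_nonempty_iff.2 fun hΩ ↦ ?_
  have hfr : frontier (connectedComponentIn Kᶜ z) ⊆ K :=
    (frontier_connectedComponentIn_subset_compl hK.isOpen_compl z).trans_eq (compl_compl K)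
  exact hz (h _ hb hΩ hfr (mem_connectedComponentIn hz))

theorem omegaConvex_image_of_subset_general {G Ω K K' U : Set ℂ} {φ : ℂ → ℂ}
    (hKK' : K ⊆ K') (hK : IsCompact K) (hK' : IsCompact K') (hK'G : K' ⊆ G)
    (hU : IsOpen U) (hK'U : K' ⊆ U) (hφ : ContinuousOn φ U) (hinj : InjOn φ U)
    (hKconv : OmegaConvex G K) (hK'conv : OmegaConvex Ω (φ '' K')) :
    OmegaConvex Ω (φ '' K) := by
  have hKU : K ⊆ U := hKK'.trans hK'U
  rw [omegaConvex_iff_subset_of_frontier_subset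
    (hK.image_of_continuousOn (hφ.mono hKU)).isClosed]
  intro s hsb hsΩ hfr
  have hsK' : s ⊆ φ '' K' :=
    hK'conv.subset_of_frontier_subset hsb hsΩ (hfr.trans (image_mono hKK'))
  have hVK' : φ ⁻¹' s ∩ U ⊆ K' := fun x ⟨hxs, hxU⟩ ↦
    (hinj.mem_image_iff hK'U hxU).1 (hsK' hxs)
  have hVfr : frontier (φ ⁻¹' s ∩ U) ⊆ K :=
    frontier_preimage_inter_subset_of_injOn hU hφ hinj hKU
      ((closure_minimal hVK' hK'.isClosed).trans hK'U) hfr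
  have hVK : φ ⁻¹' s ∩ U ⊆ K :=
    hKconv.subset_of_frontier_subset (hK'.isBounded.subset hVK') (hVK'.trans hK'G) hVfr
  intro y hy
  obtain ⟨x, hxK', rfl⟩ := hsK' hy
  exact mem_image_of_mem φ (hVK ⟨hy, hK'U hxK'⟩)

/-- Lemma `Lemma3.11`. -/
theorem omegaConvex_image_of_subset
    (G Ω : Set ℂ) (hG : IsOpen G) (hGconn : IsConnected G)
    (hΩ : IsOpen Ω) (hΩconn : IsConnected Ω)
    (K K' : Set ℂ) (hKK' : K ⊆ K') (hK : IsCompact K) (hK' : IsCompact K') (hK'G : K' ⊆ G)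
    (φ : ℂ → ℂ) (hφd : DifferentiableOn ℂ φ G) (hφm : Set.MapsTo φ G Ω)
    (hinj : ∃ U : Set ℂ, IsOpen U ∧ K' ⊆ U ∧ U ⊆ G ∧ Set.InjOn φ U)
    (hKconv : OmegaConvex G K) (hK'conv : OmegaConvex Ω (φ '' K')) :
    OmegaConvex Ω (φ '' K) := by
  obtain ⟨U, hU, hK'U, hUG, hinjU⟩ := hinj
  exact omegaConvex_image_of_subset_general hKK' hK hK' hK'G hU hK'U
    (hφd.continuousOn.mono hUG) hinjU hKconv hK'conv
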